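/- arXiv:2504.17687 — 2 statements merged into one kernel-verified Lean document; each statement's English description precedes it below -/
import Mathlib

section
/- Let f ∈ ℤ_p{x}, α ∈ ℤ_p with f(α) = 0 and f'(α) ≠ 0, e = v_p(f'(α)), and m > e. Then for s > 0, ∫_{α+p^mℤ_p} |f(x)|_p^s dx = (p^{-m} - p^{-m-1}) · p^{-ms} |f'(α)|_p^s / (1 - p^{-(s+1)}). -/
open MeasureTheory Filter

/-!
Taylor expansion at a zero `α` of `f` gives `f x = (x - α) (f' α + c (x - α))` with `‖c‖ ≤ 1`, so
the ultrametric inequality yields `‖f x‖ = ‖f' α‖ ‖x - α‖` as soon as `‖x - α‖ < ‖f' α‖`. It remains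
to integrate the radial function `‖x - α‖ ^ s`. A punctured ball is the disjoint union of the
spheres of radius `p ^ (-k)`, each of mass `(1 - p⁻¹) p ^ (-k)`, so the integral is a geometric
series of ratio `p ^ (-(s + 1))`, convergent exactly for `-1 < s`.
-/

open Metric

section PowerSeries

section Semiring

variable {R : Type*} [Semiring R]

/-- The value at `x` of the power series `∑ a i X ^ i`, with the junk value `0` where the
series is not unconditionally summable. -/
noncomputable def evalSeries [TopologicalSpace R] (a : ℕ → R) (x : R) : R :=
  ∑' i : ℕ, a i * x ^ i

/-- The coefficients of the formal derivative of the power series `∑ a i X ^ i`. -/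
def derivCoeff (a : ℕ → R) (i : ℕ) : R :=
  ((i + 1 : ℕ) : R) * a (i + 1)

end Semiring

section Taylor

variable {R : Type*} [CommRing R] [TopologicalSpace R] [IsTopologicalRing R] [T2Space R]

theorem evalSeries_derivCoeff {a : ℕ → R} {x : R}
    (h : Summable fun i ↦ a i * (i * x ^ (i - 1))) :
    evalSeries (derivCoeff a) x = ∑' i, a i * (i * x ^ (i - 1)) := by
  rw [h.tsum_eq_zero_add]
  simp only [Nat.cast_zero, zero_mul, mul_zero, zero_add, Nat.add_sub_cancel]
  exact tsum_congr fun i ↦ by rw [derivCoeff]; ring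

theorem evalSeries_add {a : ℕ → R} {x y : R} (h₀ : Summable fun i ↦ a i * x ^ i)
    (h₁ : Summable fun i ↦ a i * (i * x ^ (i - 1)))
    (h₂ : Summable fun i ↦ a i * (Polynomial.powAddExpansion x y i).1) :
    evalSeries a (x + y) = evalSeries a x + evalSeries (derivCoeff a) x * y
      + (∑' i, a i * (Polynomial.powAddExpansion x y i).1) * y ^ 2 := by
  have hterm (i : ℕ) : a i * (x + y) ^ i = a i * x ^ i + a i * (i * x ^ (i - 1)) * y
      + a i * (Polynomial.powAddExpansion x y i).1 * y ^ 2 := by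
    linear_combination a i * (Polynomial.powAddExpansion x y i).2
  have hsum := (h₀.hasSum.add (h₁.hasSum.mul_right y)).add (h₂.hasSum.mul_right (y ^ 2))
  simp only [← hterm] at hsum
  rw [evalSeries_derivCoeff h₁]
  exact hsum.tsum_eq

end Taylor

section Ultrametric

variable {R : Type*} [NormedRing R] [IsUltrametricDist R]

theorem summable_mul_of_tendsto_zero_of_norm_le [CompleteSpace R] {a b : ℕ → R}
    (ha : Tendsto a atTop (nhds 0)) {C : ℝ} (hb : ∀ i, ‖b i‖ ≤ C) :
    Summable fun i ↦ a i * b i := by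
  apply NonarchimedeanAddGroup.summable_of_tendsto_cofinite_zero
  rw [Nat.cofinite_eq_atTop]
  exact ha.zero_mul_isBoundedUnder_le (isBoundedUnder_of ⟨C, hb⟩)

theorem norm_mul_add_mul_sq_of_norm_lt [NormMulClass R] {c d y : R} (hc : ‖c‖ ≤ 1)
    (hy : ‖y‖ < ‖d‖) : ‖d * y + c * y ^ 2‖ = ‖d‖ * ‖y‖ := by
  have hcy : ‖c * y‖ < ‖d‖ := by
    rw [norm_mul]
    exact (mul_le_of_le_one_left (norm_nonneg y) hc).trans_lt hy
  rw [sq, ← mul_assoc, ← add_mul, norm_mul,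
    IsUltrametricDist.norm_add_eq_max_of_norm_ne_norm hcy.ne', max_eq_left hcy.le]

end Ultrametric

end PowerSeries

theorem pairwise_disjoint_sphere_of_injective {ι X : Type*} [PseudoMetricSpace X] (x : X)
    {r : ι → ℝ} (hr : Function.Injective r) :
    Pairwise (Function.onFun Disjoint fun i ↦ sphere x (r i)) :=
  fun _ _ hij ↦ Set.disjoint_left.2 fun _ hi hj ↦ hij (hr (hi.symm.trans hj))

theorem rpow_neg_add_one_pow {b : ℝ} (hb : 0 < b) (s : ℝ) (k : ℕ) :
    (b ^ (-(s + 1))) ^ k = b ^ (-(k : ℤ)) * b ^ (-(k : ℝ) * s) := by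
  rw [← Real.rpow_natCast, ← Real.rpow_mul hb.le, ← Real.rpow_intCast, ← Real.rpow_add hb]
  congr 1
  push_cast
  ring

section PadicInt

variable {p : ℕ} [Fact p.Prime]

theorem padicInt_exists_evalSeries_eq_taylor {a : ℕ → ℤ_[p]} (ha : Tendsto a atTop (nhds 0))
    (α x : ℤ_[p]) : ∃ c, evalSeries a x =
      evalSeries a α + evalSeries (derivCoeff a) α * (x - α) + c * (x - α) ^ 2 := by
  have hsum (b : ℕ → ℤ_[p]) : Summable fun i ↦ a i * b i :=
    summable_mul_of_tendsto_zero_of_norm_le ha fun i ↦ (b i).norm_le_one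
  obtain ⟨y, rfl⟩ : ∃ y, x = α + y := ⟨x - α, (add_sub_cancel α x).symm⟩
  rw [add_sub_cancel_left]
  exact ⟨_, evalSeries_add (hsum _) (hsum _) (hsum _)⟩

theorem padicInt_norm_evalSeries_of_norm_sub_lt {a : ℕ → ℤ_[p]} (ha : Tendsto a atTop (nhds 0))
    {α x : ℤ_[p]} (hα : evalSeries a α = 0) (hx : ‖x - α‖ < ‖evalSeries (derivCoeff a) α‖) :
    ‖evalSeries a x‖ = ‖evalSeries (derivCoeff a) α‖ * ‖x - α‖ := by
  obtain ⟨c, hc⟩ := padicInt_exists_evalSeries_eq_taylor ha α x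
  rw [hc, hα, zero_add, norm_mul_add_mul_sq_of_norm_lt c.norm_le_one hx]

theorem padicInt_closedBall_zero_eq_ker_toZModPow (k : ℕ) :
    closedBall (0 : ℤ_[p]) ((p : ℝ) ^ (-(k : ℤ))) =
      (PadicInt.toZModPow (p := p) k).toAddMonoidHom.ker := by
  ext x
  rw [mem_closedBall_zero_iff, PadicInt.norm_le_pow_iff_mem_span_pow, ← PadicInt.ker_toZModPow]
  rfl

theorem padicInt_index_ker_toZModPow (k : ℕ) :
    (PadicInt.toZModPow (p := p) k).toAddMonoidHom.ker.index = p ^ k := by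
  have hsurj : Function.Surjective (PadicInt.toZModPow (p := p) k).toAddMonoidHom :=
    ZMod.ringHom_surjective (PadicInt.toZModPow k)
  rw [AddSubgroup.index_ker, AddMonoidHom.range_eq_top.2 hsurj, AddSubgroup.card_top, Nat.card_zmod]

theorem padicInt_sphere_eq_closedBall_diff (α : ℤ_[p]) (k : ℕ) :
    sphere α ((p : ℝ) ^ (-(k : ℤ))) =
      closedBall α ((p : ℝ) ^ (-(k : ℤ))) \ closedBall α ((p : ℝ) ^ (-((k + 1 : ℕ) : ℤ))) := by
  have hexp : -((k + 1 : ℕ) : ℤ) + 1 = -(k : ℤ) := by push_cast; ring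
  ext x
  rw [Set.mem_sdiff, mem_closedBall_iff_norm, mem_closedBall_iff_norm, mem_sphere_iff_norm,
    PadicInt.norm_le_pow_iff_norm_lt_pow_add_one _ (-((k + 1 : ℕ) : ℤ)), hexp, not_lt,
    le_antisymm_iff]

theorem padicInt_iUnion_sphere_eq_closedBall_diff (α : ℤ_[p]) (m : ℕ) :
    ⋃ k : ℕ, sphere α ((p : ℝ) ^ (-((m + k : ℕ) : ℤ))) =
      closedBall α ((p : ℝ) ^ (-(m : ℤ))) \ {α} := by
  have hp : (1 : ℝ) < p := mod_cast (Fact.out : p.Prime).one_lt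
  ext x
  simp only [Set.mem_iUnion, Set.mem_sdiff, Set.mem_singleton_iff, mem_sphere_iff_norm,
    mem_closedBall_iff_norm]
  constructor
  · rintro ⟨k, hk⟩
    refine ⟨hk.trans_le (zpow_le_zpow_right₀ hp.le (by lia)), ?_⟩
    rintro rfl
    rw [sub_self, norm_zero] at hk
    exact (zpow_pos (by positivity) _).ne hk
  · rintro ⟨hx, hne⟩
    have hne' : x - α ≠ 0 := sub_ne_zero.2 hne
    obtain ⟨k, hk⟩ := Nat.exists_eq_add_of_le
      ((PadicInt.norm_le_pow_iff_le_valuation _ hne' m).1 hx)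
    exact ⟨k, hk ▸ PadicInt.norm_eq_zpow_neg_valuation hne'⟩

section Measure

variable [MeasurableSpace ℤ_[p]] [BorelSpace ℤ_[p]]
  (μ : Measure ℤ_[p]) [IsProbabilityMeasure μ] [μ.IsAddLeftInvariant]

theorem padicInt_measureReal_closedBall (α : ℤ_[p]) (k : ℕ) :
    μ.real (closedBall α ((p : ℝ) ^ (-(k : ℤ)))) = (p : ℝ) ^ (-(k : ℤ)) := by
  let H := (PadicInt.toZModPow (p := p) k).toAddMonoidHom.ker
  have hball : closedBall (0 : ℤ_[p]) ((p : ℝ) ^ (-(k : ℤ))) = H :=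
    padicInt_closedBall_zero_eq_ker_toZModPow k
  have hindex : H.index = p ^ k := padicInt_index_ker_toZModPow k
  have : H.FiniteIndex := ⟨hindex ▸ pow_ne_zero k (Fact.out : p.Prime).ne_zero⟩
  have hmass : (p : ℝ) ^ k * μ.real H = 1 := by
    have h := H.index_mul_measure (hball ▸ isClosed_closedBall.measurableSet) μ
    rw [measure_univ, hindex] at h
    simpa [Measure.real] using congrArg ENNReal.toReal h
  have htranslate : (α + ·) ⁻¹' closedBall α ((p : ℝ) ^ (-(k : ℤ))) = H := by
    rw [preimage_add_closedBall, sub_self, hball]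
  rw [Measure.real, ← measure_preimage_add μ α, htranslate, zpow_neg, zpow_natCast]
  exact eq_inv_of_mul_eq_one_right hmass

theorem padicInt_measureReal_sphere (α : ℤ_[p]) (k : ℕ) :
    μ.real (sphere α ((p : ℝ) ^ (-(k : ℤ)))) = (1 - (p : ℝ)⁻¹) * (p : ℝ) ^ (-(k : ℤ)) := by
  have hp : (1 : ℝ) < p := mod_cast (Fact.out : p.Prime).one_lt
  have hsub : closedBall α ((p : ℝ) ^ (-((k + 1 : ℕ) : ℤ))) ⊆
      closedBall α ((p : ℝ) ^ (-(k : ℤ))) :=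
    closedBall_subset_closedBall (zpow_le_zpow_right₀ hp.le (by lia))
  rw [padicInt_sphere_eq_closedBall_diff, measureReal_sdiff hsub isClosed_closedBall.measurableSet,
    padicInt_measureReal_closedBall, padicInt_measureReal_closedBall, Nat.cast_add, Nat.cast_one,
    neg_add', zpow_sub_one₀ (by positivity)]
  ring

theorem padicInt_nullSingletonClass : NullSingletonClass μ := by
  refine ⟨fun α ↦ (measureReal_eq_zero_iff).1 ?_⟩
  have hp : (1 : ℝ) < p := mod_cast (Fact.out : p.Prime).one_lt
  have hle (k : ℕ) : μ.real {α} ≤ (p : ℝ)⁻¹ ^ k := by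
    rw [inv_pow, ← zpow_natCast, ← zpow_neg, ← padicInt_measureReal_closedBall μ α k]
    exact measureReal_mono (Set.singleton_subset_iff.2 (mem_closedBall_self (by positivity)))
  have hlim := tendsto_pow_atTop_nhds_zero_of_lt_one (by positivity) (inv_lt_one_of_one_lt₀ hp)
  exact le_antisymm (ge_of_tendsto' hlim hle) measureReal_nonneg

section Radial

variable {E : Type*} [NormedAddCommGroup E] [NormedSpace ℝ E] [CompleteSpace E]

theorem padicInt_setIntegral_sphere_comp_norm_sub (α : ℤ_[p]) (g : ℝ → E) (k : ℕ) :
    ∫ x in sphere α ((p : ℝ) ^ (-(k : ℤ))), g ‖x - α‖ ∂μ =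
      ((1 - (p : ℝ)⁻¹) * (p : ℝ) ^ (-(k : ℤ))) • g ((p : ℝ) ^ (-(k : ℤ))) := by
  rw [setIntegral_congr_fun isClosed_sphere.measurableSet
    fun x hx ↦ congrArg g (mem_sphere_iff_norm.1 hx), setIntegral_const,
    padicInt_measureReal_sphere]

theorem padicInt_hasSum_setIntegral_closedBall_comp_norm_sub (α : ℤ_[p]) (g : ℝ → E) (m : ℕ)
    (hg : Summable fun k : ℕ ↦
      (p : ℝ) ^ (-((m + k : ℕ) : ℤ)) * ‖g ((p : ℝ) ^ (-((m + k : ℕ) : ℤ)))‖) :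
    HasSum (fun k : ℕ ↦ ((1 - (p : ℝ)⁻¹) * (p : ℝ) ^ (-((m + k : ℕ) : ℤ))) •
        g ((p : ℝ) ^ (-((m + k : ℕ) : ℤ))))
      (∫ x in closedBall α ((p : ℝ) ^ (-(m : ℤ))), g ‖x - α‖ ∂μ) := by
  have hp : (1 : ℝ) < p := mod_cast (Fact.out : p.Prime).one_lt
  have hradius : Function.Injective fun k : ℕ ↦ (p : ℝ) ^ (-((m + k : ℕ) : ℤ)) := fun j k hjk ↦ by
    have := zpow_right_injective₀ (by positivity) hp.ne' hjk
    lia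
  have hsphere (k : ℕ) : IntegrableOn (fun x ↦ g ‖x - α‖)
      (sphere α ((p : ℝ) ^ (-((m + k : ℕ) : ℤ)))) μ :=
    (integrableOn_congr_fun (fun x hx ↦ congrArg g (mem_sphere_iff_norm.1 hx))
      isClosed_sphere.measurableSet).2 integrableOn_const
  have hint : IntegrableOn (fun x ↦ g ‖x - α‖)
      (⋃ k : ℕ, sphere α ((p : ℝ) ^ (-((m + k : ℕ) : ℤ)))) μ := by
    refine integrableOn_iUnion_of_summable_integral_norm hsphere ?_
    simp only [padicInt_setIntegral_sphere_comp_norm_sub μ α fun r ↦ ‖g r‖, smul_eq_mul, mul_assoc]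
    exact hg.mul_left _
  have hball : (⋃ k : ℕ, sphere α ((p : ℝ) ^ (-((m + k : ℕ) : ℤ)))) =ᵐ[μ]
      closedBall α ((p : ℝ) ^ (-(m : ℤ))) := by
    have := padicInt_nullSingletonClass μ
    rw [padicInt_iUnion_sphere_eq_closedBall_diff]
    exact sdiff_null_ae_eq_self (measure_singleton α)
  simpa only [padicInt_setIntegral_sphere_comp_norm_sub, setIntegral_congr_set hball] using
    hasSum_integral_iUnion (fun _ ↦ isClosed_sphere.measurableSet)
      (pairwise_disjoint_sphere_of_injective α hradius) hint

end Radial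

theorem padicInt_setIntegral_closedBall_norm_sub_rpow (α : ℤ_[p]) (m : ℕ) {s : ℝ} (hs : -1 < s) :
    ∫ x in closedBall α ((p : ℝ) ^ (-(m : ℤ))), ‖x - α‖ ^ s ∂μ =
      ((p : ℝ) ^ (-(m : ℤ)) - (p : ℝ) ^ (-(m : ℤ) - 1)) * (p : ℝ) ^ (-(m : ℝ) * s)
        / (1 - (p : ℝ) ^ (-(s + 1))) := by
  have hp : (1 : ℝ) < p := mod_cast (Fact.out : p.Prime).one_lt
  have hp₀ : (0 : ℝ) < p := by positivity
  set r : ℝ := (p : ℝ) ^ (-(s + 1)) with hr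
  have hr₁ : r < 1 := Real.rpow_lt_one_of_one_lt_of_neg hp (by linarith)
  have hterm (k : ℕ) : (p : ℝ) ^ (-(k : ℤ)) * ((p : ℝ) ^ (-(k : ℤ))) ^ s = r ^ k := by
    rw [hr, rpow_neg_add_one_pow hp₀, ← Real.rpow_intCast, ← Real.rpow_mul hp₀.le]
    push_cast
    rfl
  have hgeom : HasSum (fun k ↦ r ^ (m + k)) (r ^ m * (1 - r)⁻¹) := by
    simpa only [pow_add] using
      (hasSum_geometric_of_lt_one (Real.rpow_nonneg hp₀.le _) hr₁).mul_left (r ^ m)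
  have hradial := padicInt_hasSum_setIntegral_closedBall_comp_norm_sub μ α (· ^ s) m <| by
    simpa only [Real.norm_of_nonneg (Real.rpow_nonneg (zpow_nonneg hp₀.le _) s), hterm] using
      hgeom.summable
  simp only [smul_eq_mul, mul_assoc, hterm] at hradial
  rw [hradial.unique (hgeom.mul_left _), rpow_neg_add_one_pow hp₀, zpow_sub_one₀ hp₀.ne']
  ring

theorem stmt_13_general {a : ℕ → ℤ_[p]} (ha : Tendsto a atTop (nhds 0)) {α : ℤ_[p]} {m : ℕ}
    (hα : evalSeries a α = 0) (hm : (p : ℝ) ^ (-(m : ℤ)) < ‖evalSeries (derivCoeff a) α‖)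
    {s : ℝ} (hs : -1 < s) :
    ∫ x in closedBall α ((p : ℝ) ^ (-(m : ℤ))), ‖evalSeries a x‖ ^ s ∂μ =
      ((p : ℝ) ^ (-(m : ℤ)) - (p : ℝ) ^ (-(m : ℤ) - 1)) * (p : ℝ) ^ (-(m : ℝ) * s)
        * ‖evalSeries (derivCoeff a) α‖ ^ s / (1 - (p : ℝ) ^ (-(s + 1))) := by
  have hnorm : ∀ x ∈ closedBall α ((p : ℝ) ^ (-(m : ℤ))),
      ‖evalSeries a x‖ ^ s = ‖evalSeries (derivCoeff a) α‖ ^ s * ‖x - α‖ ^ s := by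
    intro x hx
    rw [padicInt_norm_evalSeries_of_norm_sub_lt ha hα ((mem_closedBall_iff_norm.1 hx).trans_lt hm),
      Real.mul_rpow (norm_nonneg _) (norm_nonneg _)]
  rw [setIntegral_congr_fun isClosed_closedBall.measurableSet hnorm, integral_const_mul,
    padicInt_setIntegral_closedBall_norm_sub_rpow μ α m hs]
  ring

end Measure

end PadicInt

/-- Integral of `|f|^s` over a small ball around a simple zero `α` of a restricted power
series `f` (given by coefficients `a i → 0`, with `f x = ∑' i, a i * x ^ i` and
`f' x = ∑' i, (i+1) * a (i+1) * x ^ i`), where `e = v_p(f'(α))` and `m > e`. -/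
theorem stmt_13 (p : ℕ) [Fact p.Prime]
    [MeasurableSpace ℤ_[p]] [BorelSpace ℤ_[p]]
    (μ : Measure ℤ_[p]) [μ.IsAddHaarMeasure] (hμ : μ Set.univ = 1)
    (a : ℕ → ℤ_[p]) (ha : Tendsto a atTop (nhds 0)) (α : ℤ_[p]) (e m : ℕ)
    (hzero : (∑' i : ℕ, a i * α ^ i) = 0)
    (hne : (∑' i : ℕ, ((i + 1 : ℕ) : ℤ_[p]) * a (i + 1) * α ^ i) ≠ 0)
    (hval : ‖∑' i : ℕ, ((i + 1 : ℕ) : ℤ_[p]) * a (i + 1) * α ^ i‖ = (p : ℝ) ^ (-(e : ℤ)))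
    (hm : e < m) (s : ℝ) (hs : 0 < s) :
    (∫ x in {x : ℤ_[p] | ‖x - α‖ ≤ (p : ℝ) ^ (-(m : ℤ))}, ‖∑' i : ℕ, a i * x ^ i‖ ^ s ∂μ)
      = ((p : ℝ) ^ (-(m : ℤ)) - (p : ℝ) ^ (-(m : ℤ) - 1))
        * (p : ℝ) ^ (-(m : ℝ) * s)
        * ‖∑' i : ℕ, ((i + 1 : ℕ) : ℤ_[p]) * a (i + 1) * α ^ i‖ ^ s
        / (1 - (p : ℝ) ^ (-(s + 1))) := by
  have : IsProbabilityMeasure μ := ⟨hμ⟩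
  have hp : (1 : ℝ) < p := mod_cast (Fact.out : p.Prime).one_lt
  have hball : (p : ℝ) ^ (-(m : ℤ)) < ‖evalSeries (derivCoeff a) α‖ :=
    (zpow_lt_zpow_right₀ hp (by lia)).trans_eq hval.symm
  exact stmt_13_general μ ha hzero hball (by linarith)
end

section
/- Let f ∈ ℤ_p{x_1,…,x_n} be nonzero with f(0)=0, non-degenerate over 𝔽_p with respect to all faces of its Newton polyhedron Γ(f). Then there exists N such that for all D ≥ N, the truncation f_D has the same Igusa zeta function as f: ∫_{ℤ_p^n}|f_D(x)|_p^s dx = ∫_{ℤ_p^n}|f(x)|_p^s dx for all s > 0. -/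
open MeasureTheory Filter

/-- The Newton polyhedron of a (support) set `S ⊆ ℕ^n`: the convex hull in `(ℝ⁺)^n` of
the union of the translated positive orthants `ω + (ℝ⁺)^n`, `ω ∈ S`. -/
def newtonPolyhedron (n : ℕ) (S : Set (Fin n → ℕ)) : Set (Fin n → ℝ) :=
  convexHull ℝ (⋃ ω ∈ S, {y : Fin n → ℝ | ∀ j, (ω j : ℝ) ≤ y j})

/-- The first meet locus `F(k) = {z ∈ Γ | k·z = m(k)}` of a vector `k ∈ (ℝ⁺)^n`, where
`m(k) = inf_{y ∈ Γ} k·y` and `Γ` is the Newton polyhedron of `S`. Every face of the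
Newton polyhedron arises in this way (with `F(0) = Γ` itself). -/
def firstMeetLocus (n : ℕ) (S : Set (Fin n → ℕ)) (k : Fin n → ℝ) : Set (Fin n → ℝ) :=
  {z ∈ newtonPolyhedron n S |
    ∑ j, k j * z j = sInf ((fun y => ∑ j, k j * y j) '' newtonPolyhedron n S)}

/-- The value at `x` of the face series `f_τ = ∑_{ω ∈ τ} a_ω x^ω` associated to a face
`τ ⊆ ℝ^n` of the Newton polyhedron of `f = ∑ a_ω x^ω`. -/
noncomputable def faceEval (p : ℕ) [Fact p.Prime] (n : ℕ) (a : (Fin n → ℕ) → ℤ_[p])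
    (τ : Set (Fin n → ℝ)) (x : Fin n → ℤ_[p]) : ℤ_[p] :=
  ∑' ω : Fin n → ℕ,
    Set.indicator {ω : Fin n → ℕ | (fun j => (ω j : ℝ)) ∈ τ}
      (fun ω => a ω * ∏ j, x j ^ ω j) ω

/-- The value at `x` of the `i`-th partial derivative `∂f_τ/∂x_i` of the face series
`f_τ`. -/
noncomputable def faceDerivEval (p : ℕ) [Fact p.Prime] (n : ℕ) (a : (Fin n → ℕ) → ℤ_[p])
    (τ : Set (Fin n → ℝ)) (i : Fin n) (x : Fin n → ℤ_[p]) : ℤ_[p] :=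
  ∑' ω : Fin n → ℕ,
    Set.indicator {ω : Fin n → ℕ | (fun j => (ω j : ℝ)) ∈ τ}
      (fun ω => ((ω i : ℤ_[p])) * a ω * ∏ j, x j ^ (ω j - if j = i then 1 else 0)) ω

/-- `f` is non-degenerate over `𝔽_p` with respect to all the faces of its Newton
polyhedron: for every face `τ` (i.e. every first meet locus `F(k)`, `k ∈ (ℝ⁺)^n`),
the congruences `f_τ ≡ 0`, `∂f_τ/∂x_i ≡ 0 (mod p)` have no common solution in
`(ℤ_p^×)^n`. -/
def NonDegenerate (p : ℕ) [Fact p.Prime] (n : ℕ) (a : (Fin n → ℕ) → ℤ_[p]) : Prop :=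
  ∀ k : Fin n → ℝ, (∀ j, 0 ≤ k j) →
    ¬ ∃ x : Fin n → ℤ_[p], (∀ j, IsUnit (x j)) ∧
      (p : ℤ_[p]) ∣ faceEval p n a (firstMeetLocus n {ω | a ω ≠ 0} k) x ∧
      ∀ i : Fin n, (p : ℤ_[p]) ∣ faceDerivEval p n a (firstMeetLocus n {ω | a ω ≠ 0} k) i x

/-!
Cut the points of `ℤ_p^n` with nonzero coordinates into the polydiscs `∏ y_j (1 + pℤ_p)`, and write
`y_j = p ^ k_j * u_j` with `u_j` a unit. After the substitution `x_j = p ^ k_j * v_j` and division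
by `p ^ m(k)`, the series `f` becomes congruent modulo `p` to its face series `f_τ`, where
`τ = F(k)`, and `v` runs over the residue class of `u`. Non-degeneracy leaves two cases. If
`f_τ(u) ≢ 0`, then `|f|` is constant on the polydisc. Otherwise some `∂f_τ/∂x_i (u) ≢ 0`, and by
Hensel's lemma `|f|` is, in the variable `x_i` alone, a constant times the distance to a zero; the
zero depends on `f`, but translation invariance removes it from the integral. In both cases the
distribution of `|f|` on the polydisc depends only on `m` and on `f_τ` modulo `p`, which `f` shares
with its truncations of large degree.
-/

section Reduction

open PadicInt

variable {p : ℕ} [Fact p.Prime]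

theorem toZMod_eq_zero_iff_norm_lt_one {x : ℤ_[p]} : toZMod x = 0 ↔ ‖x‖ < 1 := by
  rw [← RingHom.mem_ker, ker_toZMod, IsLocalRing.mem_maximalIdeal, mem_nonunits]

theorem toZMod_eq_zero_iff_dvd {x : ℤ_[p]} : toZMod x = 0 ↔ (p : ℤ_[p]) ∣ x := by
  rw [toZMod_eq_zero_iff_norm_lt_one, norm_lt_one_iff_dvd]

theorem norm_eq_one_of_toZMod_ne_zero {x : ℤ_[p]} (hx : toZMod x ≠ 0) : ‖x‖ = 1 :=
  le_antisymm (norm_le_one x) (not_lt.1 (toZMod_eq_zero_iff_norm_lt_one.not.1 hx))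

theorem norm_le_inv_of_toZMod_eq_zero {x : ℤ_[p]} (hx : toZMod x = 0) : ‖x‖ ≤ (p : ℝ)⁻¹ := by
  simpa using (norm_le_pow_iff_norm_lt_pow_add_one x (-1)).2
    (by simpa using toZMod_eq_zero_iff_norm_lt_one.1 hx)

theorem continuous_toZMod : Continuous (toZMod : ℤ_[p] → ZMod p) := by
  refine continuous_of_continuousAt_zero _ ((continuousAt_const (y := (0 : ZMod p))).congr ?_)
  filter_upwards [Metric.ball_mem_nhds (0 : ℤ_[p]) one_pos] with x hx
  exact (toZMod_eq_zero_iff_norm_lt_one.2 (mem_ball_zero_iff.1 hx)).symm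

theorem neBot_nhdsNE_zero : (nhdsWithin (0 : ℤ_[p]) {0}ᶜ).NeBot := by
  have hpow : Tendsto (fun k : ℕ => (p : ℤ_[p]) ^ k) atTop (nhdsWithin 0 {0}ᶜ) :=
    tendsto_nhdsWithin_iff.2 ⟨tendsto_pow_atTop_nhds_zero_of_norm_lt_one
      ((norm_lt_one_iff_dvd _).2 dvd_rfl),
      .of_forall fun k => pow_ne_zero k (NeZero.ne _)⟩
  exact hpow.neBot

theorem exists_eq_zero_of_slope {g : ℤ_[p] → ℤ_[p]} {w d : ZMod p} (hd : d ≠ 0)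
    (hg : ∀ t, toZMod t = w → toZMod (g t) = 0)
    (hslope : ∀ t t', toZMod t = w → toZMod t' = w →
      ∃ q, toZMod q = d ∧ g t - g t' = (t - t') * q) :
    ∃ t₀, toZMod t₀ = w ∧ g t₀ = 0 := by
  obtain ⟨w', hw'⟩ := ZMod.ringHom_surjective (toZMod (p := p)) w
  obtain ⟨e, he⟩ := ZMod.ringHom_surjective (toZMod (p := p)) d⁻¹
  -- Newton's method with the constant slope `1 / e` contracts the residue class.
  have hmaps : Set.MapsTo (fun t => t - g t * e) (toZMod ⁻¹' {w}) (toZMod ⁻¹' {w}) := by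
    intro t ht
    simpa [hg t ht] using ht
  have hcontr : ContractingWith (p : NNReal)⁻¹ (hmaps.restrict _ _ _) := by
    refine ⟨inv_lt_one_of_one_lt₀ (mod_cast (Fact.out : p.Prime).one_lt),
      LipschitzWith.of_dist_le_mul fun ⟨t, ht⟩ ⟨t', ht'⟩ => ?_⟩
    obtain ⟨q, hqd, hq⟩ := hslope t t' ht ht'
    have hred : toZMod (1 - q * e) = 0 := by simp [hqd, he, hd]
    calc ‖(t - g t * e) - (t' - g t' * e)‖ = ‖1 - q * e‖ * ‖t - t'‖ := by
          rw [← norm_mul]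
          congr 1
          linear_combination -e * hq
      _ ≤ (p : ℝ)⁻¹ * ‖t - t'‖ := by gcongr; exact norm_le_inv_of_toZMod_eq_zero hred
      _ = _ := by simp [Subtype.dist_eq, dist_eq_norm]
  have hcomplete : IsComplete (toZMod (p := p) ⁻¹' {w}) :=
    (isClosed_singleton.preimage continuous_toZMod).isComplete
  obtain ⟨t₀, ht₀, hfix, -⟩ := hcontr.exists_fixedPoint' hcomplete hmaps hw' (edist_ne_top _ _)
  have he0 : e ≠ 0 := by
    rintro rfl
    simp [eq_comm, hd] at he
  exact ⟨t₀, ht₀, (mul_eq_zero.1 (sub_eq_self.1 hfix)).resolve_right he0⟩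

theorem exists_norm_eq_norm_sub_of_slope {g : ℤ_[p] → ℤ_[p]} {w d : ZMod p} (hd : d ≠ 0)
    (hg : ∀ t, toZMod t = w → toZMod (g t) = 0)
    (hslope : ∀ t t', toZMod t = w → toZMod t' = w →
      ∃ q, toZMod q = d ∧ g t - g t' = (t - t') * q) :
    ∃ t₀, toZMod t₀ = w ∧ ∀ t, toZMod t = w → ‖g t‖ = ‖t - t₀‖ := by
  obtain ⟨t₀, ht₀, hgt₀⟩ := exists_eq_zero_of_slope hd hg hslope
  refine ⟨t₀, ht₀, fun t ht => ?_⟩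
  obtain ⟨q, rfl, hq⟩ := hslope t t₀ ht ht₀
  rw [← sub_zero (g t), ← hgt₀, hq, norm_mul, norm_eq_one_of_toZMod_ne_zero hd, mul_one]

end Reduction

section Series

open PadicInt

variable {p : ℕ} [Fact p.Prime]

theorem tendsto_indicator_zero {α E : Type*} [SeminormedAddGroup E] {f : α → E} {l : Filter α}
    (hf : Tendsto f l (nhds 0)) (s : Set α) : Tendsto (s.indicator f) l (nhds 0) :=
  squeeze_zero_norm (norm_indicator_le_norm_self f) (tendsto_zero_iff_norm_tendsto_zero.1 hf)

theorem summable_mul_of_tendsto_zero {α : Type*} {c : α → ℤ_[p]}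
    (hc : Tendsto c cofinite (nhds 0)) (e : α → ℤ_[p]) : Summable fun i => c i * e i :=
  NonarchimedeanAddGroup.summable_of_tendsto_cofinite_zero <|
    hc.zero_mul_isBoundedUnder_le ⟨1, by simp [norm_le_one]⟩

theorem toZMod_tsum_mul {α : Type*} {c : α → ℤ_[p]} (hc : Tendsto c cofinite (nhds 0))
    (e : α → ℤ_[p]) : toZMod (∑' i, c i * e i) = ∑' i, toZMod (c i) * toZMod (e i) := by
  simp_rw [(summable_mul_of_tendsto_zero hc e).map_tsum toZMod continuous_toZMod, map_mul]

variable {ι : Type*} [Fintype ι]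

/-- The value at `x` of the power series `∑ c_ω x^ω`. -/
noncomputable def seriesEval (c : (ι → ℕ) → ℤ_[p]) (x : ι → ℤ_[p]) : ℤ_[p] :=
  ∑' ω : ι → ℕ, c ω * ∏ j, x j ^ ω j

/-- The value at `x` of the formal partial derivative `∂/∂x_i` of `∑ c_ω x^ω`. As in
`faceDerivEval`, truncated subtraction in the exponent is harmless because of the factor `ω i`. -/
noncomputable def seriesDerivEval [DecidableEq ι] (c : (ι → ℕ) → ℤ_[p]) (i : ι)
    (x : ι → ℤ_[p]) : ℤ_[p] :=
  ∑' ω : ι → ℕ, c ω * (ω i * ∏ j, x j ^ (ω j - if j = i then 1 else 0))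

variable {c d : (ι → ℕ) → ℤ_[p]} {x y : ι → ℤ_[p]}

theorem toZMod_seriesEval_congr (hc : Tendsto c cofinite (nhds 0))
    (hd : Tendsto d cofinite (nhds 0)) (hcd : ∀ ω, toZMod (c ω) = toZMod (d ω))
    (hxy : ∀ j, toZMod (x j) = toZMod (y j)) :
    toZMod (seriesEval c x) = toZMod (seriesEval d y) := by
  simp only [seriesEval, toZMod_tsum_mul hc, toZMod_tsum_mul hd, map_prod, map_pow, hcd, hxy]

variable [DecidableEq ι] {i : ι}

theorem toZMod_seriesDerivEval_congr (hc : Tendsto c cofinite (nhds 0))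
    (hd : Tendsto d cofinite (nhds 0)) (hcd : ∀ ω, toZMod (c ω) = toZMod (d ω))
    (hxy : ∀ j, toZMod (x j) = toZMod (y j)) :
    toZMod (seriesDerivEval c i x) = toZMod (seriesDerivEval d i y) := by
  simp only [seriesDerivEval, toZMod_tsum_mul hc, toZMod_tsum_mul hd, map_mul, map_natCast,
    map_prod, map_pow, hcd, hxy]

theorem prod_update_pow {R : Type*} [CommMonoid R] (x : ι → R) (i : ι) (t : R) (ω : ι → ℕ) :
    ∏ j, Function.update x i t j ^ ω j = t ^ ω i * ∏ j ∈ Finset.univ \ {i}, x j ^ ω j := by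
  simp_rw [Function.apply_update (fun j (r : R) => r ^ ω j),
    Finset.prod_update_of_mem (Finset.mem_univ i)]

theorem prod_pow_sub_ite {R : Type*} [CommMonoid R] (x : ι → R) (i : ι) (ω : ι → ℕ) :
    ∏ j, x j ^ (ω j - if j = i then 1 else 0) =
      x i ^ (ω i - 1) * ∏ j ∈ Finset.univ \ {i}, x j ^ ω j := by
  rw [Finset.prod_eq_mul_prod_sdiff_singleton_of_mem (Finset.mem_univ i)]
  congr 1
  · simp
  · exact Finset.prod_congr rfl fun j hj => by simp_all

theorem exists_slope_seriesEval_update (hc : Tendsto c cofinite (nhds 0)) {t t' : ℤ_[p]}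
    (ht : toZMod t = toZMod (x i)) (ht' : toZMod t' = toZMod (x i)) :
    ∃ q, toZMod q = toZMod (seriesDerivEval c i x) ∧
      seriesEval c (Function.update x i t) - seriesEval c (Function.update x i t') =
        (t - t') * q := by
  refine ⟨∑' ω : ι → ℕ, c ω * ((∑ l ∈ Finset.range (ω i), t ^ l * t' ^ (ω i - 1 - l)) *
    ∏ j ∈ Finset.univ \ {i}, x j ^ ω j), ?_, ?_⟩
  · simp only [seriesDerivEval, toZMod_tsum_mul hc, prod_pow_sub_ite, map_mul, map_sum, map_pow,
      map_natCast, ht, ht', geom_sum₂_self, mul_assoc]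
  · simp only [seriesEval, prod_update_pow]
    rw [← (summable_mul_of_tendsto_zero hc _).tsum_sub (summable_mul_of_tendsto_zero hc _),
      ← (summable_mul_of_tendsto_zero hc _).tsum_mul_left]
    refine tsum_congr fun ω => ?_
    linear_combination -(c ω * ∏ j ∈ Finset.univ \ {i}, x j ^ ω j) *
      (Commute.all t t').mul_geom_sum₂ (ω i)

theorem exists_norm_seriesEval_update_eq (hc : Tendsto c cofinite (nhds 0))
    (hx : toZMod (seriesEval c x) = 0) (hi : toZMod (seriesDerivEval c i x) ≠ 0) :
    ∃ t₀, toZMod t₀ = toZMod (x i) ∧ ∀ t, toZMod t = toZMod (x i) →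
      ‖seriesEval c (Function.update x i t)‖ = ‖t - t₀‖ := by
  refine exists_norm_eq_norm_sub_of_slope hi (fun t ht => ?_)
    fun t t' ht ht' => exists_slope_seriesEval_update hc ht ht'
  rw [← hx]
  refine toZMod_seriesEval_congr hc hc (fun _ => rfl) fun j => ?_
  obtain rfl | hj := eq_or_ne j i <;> simp [*]

end Series

section Polydisc

open PadicInt

variable {p : ℕ} [Fact p.Prime] {ι : Type*}

/-- The point `(p ^ k₁ * v₁, …, p ^ kₙ * vₙ)`. -/
noncomputable def scaleBy (k : ι → ℕ) (v : ι → ℤ_[p]) : ι → ℤ_[p] := fun j => p ^ k j * v j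

/-- The polydisc `∏ y_j (1 + pℤ_p)` of the points whose coordinates all have the same leading
`p`-adic digit as those of `y`. It is empty if some coordinate of `y` vanishes. -/
def polydisc (y : ι → ℤ_[p]) : Set (ι → ℤ_[p]) := Set.univ.pi fun j => Metric.ball (y j) ‖y j‖

variable {k : ι → ℕ} {u x y : ι → ℤ_[p]}

theorem update_scaleBy [DecidableEq ι] (k : ι → ℕ) (v : ι → ℤ_[p]) (i : ι) (t : ℤ_[p]) :
    Function.update (scaleBy k v) i (p ^ k i * t) = scaleBy k (Function.update v i t) := by
  ext1 j
  obtain rfl | hj := eq_or_ne j i <;> simp [scaleBy, *]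

theorem exists_scaleBy_eq (hy : ∀ j, y j ≠ 0) :
    ∃ (k : ι → ℕ) (u : ι → ℤ_[p]), (∀ j, IsUnit (u j)) ∧ scaleBy k u = y :=
  ⟨fun j => (y j).valuation, fun j => unitCoeff (hy j), fun j => (unitCoeff (hy j)).isUnit,
    funext fun j => (mul_comm _ _).trans (unitCoeff_spec (hy j)).symm⟩

theorem norm_eq_of_mem_ball_norm {s t : ℤ_[p]} (h : t ∈ Metric.ball s ‖s‖) : ‖t‖ = ‖s‖ := by
  rw [mem_ball_iff_norm] at h
  rw [← norm_neg s] at h ⊢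
  exact norm_eq_of_norm_add_lt_right (by rwa [← sub_eq_add_neg])

theorem polydisc_eq_of_mem (h : x ∈ polydisc y) : polydisc x = polydisc y := by
  refine Set.pi_congr rfl fun j hj => ?_
  rw [norm_eq_of_mem_ball_norm (h j hj), IsUltrametricDist.ball_eq_of_mem (h j hj)]

theorem mem_polydisc_self (h : ∀ j, y j ≠ 0) : y ∈ polydisc y := fun j _ =>
  Metric.mem_ball_self (norm_pos_iff.2 (h j))

theorem mem_ball_pow_mul_iff {n : ℕ} {w t : ℤ_[p]} (hw : IsUnit w) :
    t ∈ Metric.ball (p ^ n * w : ℤ_[p]) ‖(p ^ n * w : ℤ_[p])‖ ↔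
      ∃ r, toZMod r = toZMod w ∧ p ^ n * r = t := by
  have hpos : 0 < ‖(p : ℤ_[p]) ^ n‖ := norm_pos_iff.2 (pow_ne_zero n (NeZero.ne _))
  have hball (r : ℤ_[p]) : (p ^ n * r : ℤ_[p]) ∈ Metric.ball (p ^ n * w : ℤ_[p])
      ‖(p ^ n * w : ℤ_[p])‖ ↔ toZMod r = toZMod w := by
    rw [mem_ball_iff_norm, ← mul_sub, norm_mul, norm_mul, isUnit_iff.1 hw,
      mul_lt_mul_iff_right₀ hpos, ← toZMod_eq_zero_iff_norm_lt_one, map_sub, sub_eq_zero]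
  refine ⟨fun ht => ?_, fun ⟨r, hr, hrt⟩ => hrt ▸ (hball r).2 hr⟩
  obtain ⟨r, rfl⟩ : (p : ℤ_[p]) ^ n ∣ t := by
    rw [← Ideal.mem_span_singleton, ← norm_le_pow_iff_mem_span_pow, ← norm_p_pow,
      norm_eq_of_mem_ball_norm ht, norm_mul, isUnit_iff.1 hw, mul_one]
  exact ⟨r, (hball r).1 ht, rfl⟩

theorem mem_polydisc_scaleBy_iff (hu : ∀ j, IsUnit (u j)) :
    x ∈ polydisc (scaleBy k u) ↔ ∃ v, (∀ j, toZMod (v j) = toZMod (u j)) ∧ scaleBy k v = x := by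
  simp only [polydisc, Set.mem_univ_pi, scaleBy, mem_ball_pow_mul_iff (hu _), funext_iff,
    Classical.skolem, forall_and]

theorem isOpen_polydisc [Finite ι] (y : ι → ℤ_[p]) : IsOpen (polydisc y) :=
  isOpen_set_pi Set.finite_univ fun _ _ => Metric.isOpen_ball

variable [Fintype ι] {c : (ι → ℕ) → ℤ_[p]} {m : ℕ} {i : ι}

/-- The coefficients of `p ^ (-m) * f (p ^ k₁ * x₁, …, p ^ kₙ * xₙ)`, where `f = ∑ c_ω x^ω`. The
exponents `k ⬝ᵥ ω - m` are truncated; for the intended meaning, `m ≤ k ⬝ᵥ ω` on the support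
of `f`. -/
noncomputable def rescale (k : ι → ℕ) (m : ℕ) (c : (ι → ℕ) → ℤ_[p]) (ω : ι → ℕ) : ℤ_[p] :=
  c ω * p ^ (k ⬝ᵥ ω - m)

theorem tendsto_rescale (hc : Tendsto c cofinite (nhds 0)) :
    Tendsto (rescale k m c) cofinite (nhds 0) :=
  hc.zero_mul_isBoundedUnder_le ⟨1, eventually_map.2 (.of_forall fun _ => norm_le_one _)⟩

theorem toZMod_rescale (hm : ∀ ω, c ω ≠ 0 → m ≤ k ⬝ᵥ ω) (ω : ι → ℕ) :
    toZMod (rescale k m c ω) = if k ⬝ᵥ ω = m then toZMod (c ω) else 0 := by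
  obtain hω | hω := eq_or_ne (c ω) 0
  · simp [rescale, hω]
  · have := hm ω hω
    split_ifs with h
    · simp [rescale, h]
    · simp [rescale, zero_pow (show k ⬝ᵥ ω - m ≠ 0 by lia)]

theorem seriesEval_scaleBy (hc : Tendsto c cofinite (nhds 0))
    (hm : ∀ ω, c ω ≠ 0 → m ≤ k ⬝ᵥ ω) (v : ι → ℤ_[p]) :
    seriesEval c (scaleBy k v) = p ^ m * seriesEval (rescale k m c) v := by
  rw [seriesEval, seriesEval, ← (summable_mul_of_tendsto_zero (tendsto_rescale hc) _).tsum_mul_left]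
  refine tsum_congr fun ω => ?_
  have hprod : ∏ j, scaleBy k v j ^ ω j = (p : ℤ_[p]) ^ (k ⬝ᵥ ω) * ∏ j, v j ^ ω j := by
    simp only [scaleBy, mul_pow, Finset.prod_mul_distrib, ← pow_mul, Finset.prod_pow_eq_pow_sum,
      dotProduct]
  obtain hω | hω := eq_or_ne (c ω) 0
  · simp [rescale, hω]
  · rw [hprod, rescale, ← Nat.sub_add_cancel (hm ω hω), pow_add, Nat.add_sub_cancel]
    ring

theorem norm_seriesEval_of_mem_polydisc (hc : Tendsto c cofinite (nhds 0))
    (hm : ∀ ω, c ω ≠ 0 → m ≤ k ⬝ᵥ ω) (hu : ∀ j, IsUnit (u j))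
    (hval : toZMod (seriesEval (rescale k m c) u) ≠ 0) (hx : x ∈ polydisc (scaleBy k u)) :
    ‖seriesEval c x‖ = ‖(p : ℤ_[p]) ^ m‖ := by
  obtain ⟨v, hv, rfl⟩ := (mem_polydisc_scaleBy_iff hu).1 hx
  have hc' : Tendsto (rescale k m c) cofinite (nhds 0) := tendsto_rescale hc
  rw [← toZMod_seriesEval_congr hc' hc' (fun _ => rfl) hv] at hval
  rw [seriesEval_scaleBy hc hm, norm_mul, norm_eq_one_of_toZMod_ne_zero hval, mul_one]

theorem exists_norm_seriesEval_update_eq_of_mem_polydisc [DecidableEq ι]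
    (hc : Tendsto c cofinite (nhds 0)) (hm : ∀ ω, c ω ≠ 0 → m ≤ k ⬝ᵥ ω)
    (hu : ∀ j, IsUnit (u j)) (hval : toZMod (seriesEval (rescale k m c) u) = 0)
    (hderiv : toZMod (seriesDerivEval (rescale k m c) i u) ≠ 0)
    (hx : x ∈ polydisc (scaleBy k u)) :
    ∃ t₀ ∈ Metric.ball (scaleBy k u i) ‖scaleBy k u i‖,
      ∀ t ∈ Metric.ball (scaleBy k u i) ‖scaleBy k u i‖,
        ‖seriesEval c (Function.update x i t)‖ =
          ‖(p : ℤ_[p]) ^ m‖ / ‖scaleBy k u i‖ * ‖t - t₀‖ := by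
  obtain ⟨v, hv, rfl⟩ := (mem_polydisc_scaleBy_iff hu).1 hx
  have hc' : Tendsto (rescale k m c) cofinite (nhds 0) := tendsto_rescale hc
  rw [← toZMod_seriesEval_congr hc' hc' (fun _ => rfl) hv] at hval
  rw [← toZMod_seriesDerivEval_congr hc' hc' (fun _ => rfl) hv] at hderiv
  obtain ⟨r₀, hr₀, hnorm⟩ := exists_norm_seriesEval_update_eq hc' hval hderiv
  have hpos : ‖(p : ℤ_[p]) ^ k i‖ ≠ 0 := norm_ne_zero_iff.2 (pow_ne_zero _ (NeZero.ne _))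
  refine ⟨p ^ k i * r₀, (mem_ball_pow_mul_iff (hu i)).2 ⟨r₀, hr₀.trans (hv i), rfl⟩, fun t ht => ?_⟩
  obtain ⟨r, hr, rfl⟩ := (mem_ball_pow_mul_iff (hu i)).1 ht
  rw [update_scaleBy, seriesEval_scaleBy hc hm, norm_mul, hnorm r (hr.trans (hv i).symm), scaleBy,
    ← mul_sub, norm_mul (_ ^ k i), norm_mul (_ ^ k i), isUnit_iff.1 (hu i)]
  field_simp

end Polydisc

section Integration

theorem lintegral_eq_of_forall_setLIntegral_eq {X : Type*} [TopologicalSpace X]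
    [TopologicalSpace.SeparableSpace X] [MeasurableSpace X] [OpensMeasurableSpace X]
    {μ : Measure X} {U : X → Set X} (hopen : ∀ x, IsOpen (U x))
    (hcell : ∀ x, ∀ y ∈ U x, U y = U x) (hae : ∀ᵐ x ∂μ, x ∈ U x) {F G : X → ENNReal}
    (hFG : ∀ x ∈ U x, ∫⁻ y in U x, F y ∂μ = ∫⁻ y in U x, G y ∂μ) :
    ∫⁻ x, F x ∂μ = ∫⁻ x, G x ∂μ := by
  set 𝒞 : Set (Set X) := U '' {x | x ∈ U x}
  have hdisj : 𝒞.PairwiseDisjoint id := by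
    rintro _ ⟨x, -, rfl⟩ _ ⟨y, -, rfl⟩ hxy
    exact Set.disjoint_left.2 fun z hzx hzy => hxy ((hcell x z hzx).symm.trans (hcell y z hzy))
  have hopen' : ∀ C ∈ 𝒞, IsOpen (id C) := Set.forall_mem_image.2 fun x _ => hopen x
  have hmeas : ∀ C ∈ 𝒞, MeasurableSet (id C) := fun C hC => (hopen' C hC).measurableSet
  have hcount : 𝒞.Countable :=
    hdisj.countable_of_isOpen hopen' (Set.forall_mem_image.2 fun x hx => ⟨x, hx⟩)
  have hcover : (⋃ C ∈ 𝒞, id C : Set X) =ᵐ[μ] Set.univ :=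
    eventuallyEq_univ.2 (hae.mono fun x hx => Set.mem_biUnion (Set.mem_image_of_mem U hx) hx)
  rw [← setLIntegral_univ F, ← setLIntegral_univ G, ← setLIntegral_congr hcover,
    ← setLIntegral_congr hcover,
    lintegral_biUnion hcount hmeas hdisj, lintegral_biUnion hcount hmeas hdisj]
  refine tsum_congr ?_
  rintro ⟨_, x, hx, rfl⟩
  exact hFG x hx

theorem setLIntegral_pi_eq_of_update {ι : Type*} [Fintype ι] [DecidableEq ι] {X : ι → Type*}
    [∀ j, MeasurableSpace (X j)] {μ : ∀ j, Measure (X j)} [∀ j, SigmaFinite (μ j)]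
    {s : ∀ j, Set (X j)} (hs : ∀ j, MeasurableSet (s j)) {F G : (∀ j, X j) → ENNReal}
    (hF : Measurable F) (hG : Measurable G) (i : ι)
    (hFG : ∀ x ∈ Set.univ.pi s, ∫⁻ t in s i, F (Function.update x i t) ∂μ i =
      ∫⁻ t in s i, G (Function.update x i t) ∂μ i) :
    ∫⁻ x in Set.univ.pi s, F x ∂Measure.pi μ = ∫⁻ x in Set.univ.pi s, G x ∂Measure.pi μ := by
  have hpi : MeasurableSet (Set.univ.pi s) := .univ_pi hs
  rw [← lintegral_indicator hpi, ← lintegral_indicator hpi]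
  refine lintegral_eq_of_lmarginal_eq {i} (hF.indicator hpi) (hG.indicator hpi) ?_
  ext1 x
  simp only [lmarginal_singleton]
  by_cases hx : ∃ t, Function.update x i t ∈ Set.univ.pi s
  · obtain ⟨t₀, ht₀⟩ := hx
    have hslice (H : (∀ j, X j) → ENNReal) :
        ∫⁻ t, (Set.univ.pi s).indicator H (Function.update x i t) ∂μ i =
          ∫⁻ t in s i, H (Function.update (Function.update x i t₀) i t) ∂μ i := by
      rw [← lintegral_indicator (hs i)]
      refine lintegral_congr fun t => ?_
      have hmem : Function.update x i t ∈ Set.univ.pi s ↔ t ∈ s i := by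
        simpa using Set.update_mem_pi_iff_of_mem (i := i) (b := t) ht₀
      by_cases ht : t ∈ s i <;> simp [hmem, ht]
    rw [hslice F, hslice G, hFG _ ht₀]
  · push Not at hx
    simp [hx]

theorem setLIntegral_ball_norm_sub {E : Type*} [SeminormedAddCommGroup E] [IsUltrametricDist E]
    [MeasurableSpace E] [OpensMeasurableSpace E] [MeasurableAdd E] (μ : Measure E)
    [μ.IsAddRightInvariant] (φ : ℝ → ENNReal) {y t₀ : E} {r : ℝ} (ht₀ : t₀ ∈ Metric.ball y r) :
    ∫⁻ t in Metric.ball y r, φ ‖t - t₀‖ ∂μ = ∫⁻ t in Metric.ball 0 r, φ ‖t‖ ∂μ := by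
  have hpre : (fun t => t - t₀) ⁻¹' Metric.ball 0 r = Metric.ball y r := by
    rw [IsUltrametricDist.ball_eq_of_mem ht₀]
    ext t
    simp [dist_eq_norm]
  rw [← hpre]
  exact (measurePreserving_sub_right μ t₀).setLIntegral_comp_preimage_emb
    (MeasurableEquiv.subRight t₀).measurableEmbedding (fun t => φ ‖t‖) _

end Integration

section Cells

open PadicInt

variable {p : ℕ} [Fact p.Prime] [MeasurableSpace ℤ_[p]] {ι : Type*} [Fintype ι] {μ : Measure ℤ_[p]}

theorem ae_mem_polydisc_self [SigmaFinite μ] [NullSingletonClass μ] :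
    ∀ᵐ x ∂Measure.pi fun _ : ι => μ, x ∈ polydisc x := by
  filter_upwards [ae_all_iff.2 fun j => Measure.ae_eval_ne (fun _ : ι => μ) j 0] with x hx
  exact mem_polydisc_self hx

variable [BorelSpace ℤ_[p]] {c d : (ι → ℕ) → ℤ_[p]} {k : ι → ℕ} {m : ℕ} {u x : ι → ℤ_[p]} {i : ι}
  {φ : ℝ → ENNReal}

theorem measurable_seriesEval (hc : Tendsto c cofinite (nhds 0)) : Measurable (seriesEval c) := by
  refine measurable_of_tendsto_metrizable' (f := fun (s : Finset (ι → ℕ)) x =>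
    ∑ ω ∈ s, c ω * ∏ j, x j ^ ω j) atTop (fun s => Continuous.measurable (by fun_prop)) ?_
  exact tendsto_pi_nhds.2 fun x =>
    (summable_mul_of_tendsto_zero hc fun ω => ∏ j, x j ^ ω j).hasSum

theorem setLIntegral_norm_seriesEval_update_eq [DecidableEq ι] [μ.IsAddRightInvariant]
    (hc : Tendsto c cofinite (nhds 0)) (hm : ∀ ω, c ω ≠ 0 → m ≤ k ⬝ᵥ ω)
    (hu : ∀ j, IsUnit (u j)) (hval : toZMod (seriesEval (rescale k m c) u) = 0)
    (hderiv : toZMod (seriesDerivEval (rescale k m c) i u) ≠ 0)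
    (hx : x ∈ polydisc (scaleBy k u)) :
    ∫⁻ t in Metric.ball (scaleBy k u i) ‖scaleBy k u i‖,
        φ ‖seriesEval c (Function.update x i t)‖ ∂μ =
      ∫⁻ t in Metric.ball 0 ‖scaleBy k u i‖,
        φ (‖(p : ℤ_[p]) ^ m‖ / ‖scaleBy k u i‖ * ‖t‖) ∂μ := by
  obtain ⟨t₀, ht₀, hnorm⟩ :=
    exists_norm_seriesEval_update_eq_of_mem_polydisc hc hm hu hval hderiv hx
  rw [← setLIntegral_ball_norm_sub μ (fun r => φ (‖(p : ℤ_[p]) ^ m‖ / ‖scaleBy k u i‖ * r)) ht₀]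
  exact setLIntegral_congr_fun Metric.isOpen_ball.measurableSet fun t ht => by rw [hnorm t ht]

theorem setLIntegral_polydisc_norm_seriesEval_eq [DecidableEq ι] [SigmaFinite μ]
    [μ.IsAddRightInvariant] (hc : Tendsto c cofinite (nhds 0)) (hd : Tendsto d cofinite (nhds 0))
    (hmc : ∀ ω, c ω ≠ 0 → m ≤ k ⬝ᵥ ω) (hmd : ∀ ω, d ω ≠ 0 → m ≤ k ⬝ᵥ ω)
    (hcd : ∀ ω, toZMod (rescale k m c ω) = toZMod (rescale k m d ω)) (hu : ∀ j, IsUnit (u j))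
    (hsmooth : toZMod (seriesEval (rescale k m d) u) = 0 →
      ∃ i, toZMod (seriesDerivEval (rescale k m d) i u) ≠ 0) (hφ : Measurable φ) :
    ∫⁻ x in polydisc (scaleBy k u), φ ‖seriesEval c x‖ ∂(Measure.pi fun _ => μ) =
      ∫⁻ x in polydisc (scaleBy k u), φ ‖seriesEval d x‖ ∂(Measure.pi fun _ => μ) := by
  have hc' : Tendsto (rescale k m c) cofinite (nhds 0) := tendsto_rescale hc
  have hd' : Tendsto (rescale k m d) cofinite (nhds 0) := tendsto_rescale hd
  have hval := toZMod_seriesEval_congr hc' hd' hcd fun j => Eq.refl (toZMod (u j))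
  by_cases h0 : toZMod (seriesEval (rescale k m d) u) = 0
  · obtain ⟨i, hi⟩ := hsmooth h0
    have hderiv := toZMod_seriesDerivEval_congr (i := i) hc' hd' hcd
      fun j => Eq.refl (toZMod (u j))
    refine setLIntegral_pi_eq_of_update (fun _ => Metric.isOpen_ball.measurableSet)
      (hφ.comp (measurable_seriesEval hc).norm) (hφ.comp (measurable_seriesEval hd).norm) i
      fun x hx => ?_
    rw [setLIntegral_norm_seriesEval_update_eq hc hmc hu (hval.trans h0) (hderiv.trans_ne hi) hx,
      setLIntegral_norm_seriesEval_update_eq hd hmd hu h0 hi hx]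
  · refine setLIntegral_congr_fun (isOpen_polydisc _).measurableSet fun x hx => ?_
    rw [norm_seriesEval_of_mem_polydisc hc hmc hu (hval.trans_ne h0) hx,
      norm_seriesEval_of_mem_polydisc hd hmd hu h0 hx]

end Cells

section NewtonPolyhedron

variable {n : ℕ} {S : Set (Fin n → ℕ)} {k : Fin n → ℝ} {m : ℝ} {ω : Fin n → ℕ}

theorem coe_mem_newtonPolyhedron (hω : ω ∈ S) : (fun j => (ω j : ℝ)) ∈ newtonPolyhedron n S :=
  subset_convexHull ℝ _ (Set.mem_biUnion hω fun _ => le_rfl)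

theorem le_dotProduct_of_mem_newtonPolyhedron (hk : ∀ j, 0 ≤ k j)
    (hm : ∀ ω ∈ S, m ≤ ∑ j, k j * ω j) {z : Fin n → ℝ} (hz : z ∈ newtonPolyhedron n S) :
    m ≤ ∑ j, k j * z j := by
  have hconv : Convex ℝ {z : Fin n → ℝ | m ≤ ∑ j, k j * z j} :=
    convex_halfSpace_ge (dotProductBilin ℝ ℝ k).isLinear m
  refine convexHull_min (Set.iUnion₂_subset fun ω hω y hy => (hm ω hω).trans ?_) hconv hz
  exact Finset.sum_le_sum fun j _ => mul_le_mul_of_nonneg_left (hy j) (hk j)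

theorem coe_mem_firstMeetLocus_iff (hk : ∀ j, 0 ≤ k j)
    (hm : IsLeast ((fun ω : Fin n → ℕ => ∑ j, k j * ω j) '' S) m) (hω : ω ∈ S) :
    (fun j => (ω j : ℝ)) ∈ firstMeetLocus n S k ↔ ∑ j, k j * ω j = m := by
  have hinf : sInf ((fun y => ∑ j, k j * y j) '' newtonPolyhedron n S) = m := by
    refine IsLeast.csInf_eq ⟨?_, Set.forall_mem_image.2 fun z hz =>
      le_dotProduct_of_mem_newtonPolyhedron hk (fun ω hω => hm.2 ⟨ω, hω, rfl⟩) hz⟩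
    obtain ⟨ω₀, hω₀, hmin⟩ := hm.1
    exact ⟨_, coe_mem_newtonPolyhedron hω₀, hmin⟩
  rw [firstMeetLocus, hinf]
  exact and_iff_right (coe_mem_newtonPolyhedron hω)

end NewtonPolyhedron

section NonDegenerate

open PadicInt

variable {p : ℕ} [Fact p.Prime] {n : ℕ} {a b : (Fin n → ℕ) → ℤ_[p]} {k : Fin n → ℕ} {m : ℕ}
  {u : Fin n → ℤ_[p]}

theorem faceEval_eq_seriesEval (a : (Fin n → ℕ) → ℤ_[p]) (τ : Set (Fin n → ℝ))
    (x : Fin n → ℤ_[p]) :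
    faceEval p n a τ x =
      seriesEval (Set.indicator {ω : Fin n → ℕ | (fun j => (ω j : ℝ)) ∈ τ} a) x := by
  simp only [faceEval, seriesEval, Set.indicator_mul_left]

theorem faceDerivEval_eq_seriesDerivEval (a : (Fin n → ℕ) → ℤ_[p]) (τ : Set (Fin n → ℝ))
    (i : Fin n) (x : Fin n → ℤ_[p]) :
    faceDerivEval p n a τ i x =
      seriesDerivEval (Set.indicator {ω : Fin n → ℕ | (fun j => (ω j : ℝ)) ∈ τ} a) i x := by
  simp only [faceDerivEval, seriesDerivEval, Set.indicator_mul_left, mul_comm _ (a _), mul_assoc]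

theorem toZMod_rescale_eq_toZMod_indicator
    (hm : IsLeast ((fun ω : Fin n → ℕ => k ⬝ᵥ ω) '' {ω | a ω ≠ 0}) m) (ω : Fin n → ℕ) :
    toZMod (rescale k m a ω) = toZMod (Set.indicator {ω : Fin n → ℕ | (fun j => (ω j : ℝ)) ∈
      firstMeetLocus n {ω | a ω ≠ 0} (fun j => (k j : ℝ))} a ω) := by
  classical
  rw [toZMod_rescale fun ω hω => hm.2 ⟨ω, hω, rfl⟩, Set.indicator_apply, apply_ite toZMod, map_zero]
  obtain hω | hω := eq_or_ne (a ω) 0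
  · simp [hω]
  have hmReal : IsLeast ((fun ω : Fin n → ℕ => ∑ j, (k j : ℝ) * ω j) '' {ω | a ω ≠ 0}) m := by
    simpa [Set.image_image, dotProduct] using (Nat.mono_cast (α := ℝ)).map_isLeast hm
  have hface := coe_mem_firstMeetLocus_iff (fun j => (k j).cast_nonneg) hmReal hω
  exact if_congr (by rw [Set.mem_ofPred, hface, dotProduct]; norm_cast) rfl rfl

theorem NonDegenerate.exists_ne_zero (hnd : NonDegenerate p n a) : ∃ ω, a ω ≠ 0 := by
  by_contra! ha
  obtain rfl : a = 0 := funext ha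
  exact hnd 0 (fun _ => le_rfl) ⟨1, fun _ => isUnit_one, by simp [faceEval], by
    simp [faceDerivEval]⟩

theorem NonDegenerate.exists_toZMod_seriesDerivEval_rescale_ne_zero (hnd : NonDegenerate p n a)
    (ha : Tendsto a cofinite (nhds 0))
    (hm : IsLeast ((fun ω : Fin n → ℕ => k ⬝ᵥ ω) '' {ω | a ω ≠ 0}) m) (hu : ∀ j, IsUnit (u j))
    (hval : toZMod (seriesEval (rescale k m a) u) = 0) :
    ∃ i, toZMod (seriesDerivEval (rescale k m a) i u) ≠ 0 := by
  have hresc : Tendsto (rescale k m a) cofinite (nhds 0) := tendsto_rescale ha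
  by_contra! hderiv
  refine hnd (fun j => k j) (fun j => (k j).cast_nonneg) ⟨u, hu, ?_, fun i => ?_⟩
  · rw [← toZMod_eq_zero_iff_dvd, faceEval_eq_seriesEval, ← hval]
    exact (toZMod_seriesEval_congr hresc (tendsto_indicator_zero ha _)
      (toZMod_rescale_eq_toZMod_indicator hm) fun _ => rfl).symm
  · rw [← toZMod_eq_zero_iff_dvd, faceDerivEval_eq_seriesDerivEval, ← hderiv i]
    exact (toZMod_seriesDerivEval_congr hresc (tendsto_indicator_zero ha _)
      (toZMod_rescale_eq_toZMod_indicator hm) fun _ => rfl).symm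

variable [MeasurableSpace ℤ_[p]] [BorelSpace ℤ_[p]]

theorem NonDegenerate.identDistrib_norm_seriesEval (hnd : NonDegenerate p n a)
    (ha : Tendsto a cofinite (nhds 0)) (hb : Tendsto b cofinite (nhds 0))
    (hsupp : ∀ ω, b ω ≠ 0 → a ω ≠ 0) (hab : ∀ ω, toZMod (b ω) = toZMod (a ω))
    (μ : Measure ℤ_[p]) [μ.IsAddHaarMeasure] :
    ProbabilityTheory.IdentDistrib (fun x => ‖seriesEval b x‖) (fun x => ‖seriesEval a x‖)
      (Measure.pi fun _ => μ) (Measure.pi fun _ => μ) := by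
  have hmeasb := (measurable_seriesEval hb).norm
  have hmeasa := (measurable_seriesEval ha).norm
  refine ⟨hmeasb.aemeasurable, hmeasa.aemeasurable, Measure.ext_of_lintegral _ fun φ hφ => ?_⟩
  rw [lintegral_map hφ hmeasb, lintegral_map hφ hmeasa]
  have := neBot_nhdsNE_zero (p := p)
  refine lintegral_eq_of_forall_setLIntegral_eq isOpen_polydisc (fun _ _ => polydisc_eq_of_mem)
    ae_mem_polydisc_self fun y hy => ?_
  obtain ⟨k, u, hu, rfl⟩ := exists_scaleBy_eq fun j => norm_pos_iff.1 (Metric.pos_of_mem_ball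
    (hy j trivial))
  obtain ⟨ω₀, hω₀⟩ := hnd.exists_ne_zero
  obtain ⟨m, hm⟩ : ∃ m, IsLeast ((fun ω : Fin n → ℕ => k ⬝ᵥ ω) '' {ω | a ω ≠ 0}) m :=
    ⟨_, isLeast_csInf ⟨_, ω₀, hω₀, rfl⟩⟩
  have hma : ∀ ω, a ω ≠ 0 → m ≤ k ⬝ᵥ ω := fun ω hω => hm.2 ⟨ω, hω, rfl⟩
  have hmb : ∀ ω, b ω ≠ 0 → m ≤ k ⬝ᵥ ω := fun ω hω => hma ω (hsupp ω hω)
  exact setLIntegral_polydisc_norm_seriesEval_eq hb ha hmb hma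
    (fun ω => by rw [toZMod_rescale hmb, toZMod_rescale hma, hab]) hu
    (hnd.exists_toZMod_seriesDerivEval_rescale_ne_zero ha hm hu) hφ

end NonDegenerate

section Truncation

open PadicInt

variable {p : ℕ} [Fact p.Prime]

theorem exists_toZMod_indicator_degree_le_eq {ι : Type*} [Fintype ι] {a : (ι → ℕ) → ℤ_[p]}
    (ha : Tendsto a cofinite (nhds 0)) :
    ∃ N, ∀ D, N ≤ D → ∀ ω,
      toZMod (Set.indicator {ω : ι → ℕ | ∑ j, ω j ≤ D} a ω) = toZMod (a ω) := by
  have hfin : {ω | toZMod (a ω) ≠ 0}.Finite :=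
    (ha.eventually (Metric.ball_mem_nhds 0 one_pos)).mono fun ω hω =>
      toZMod_eq_zero_iff_norm_lt_one.2 (mem_ball_zero_iff.1 hω)
  obtain ⟨N, hN⟩ := (hfin.image fun ω => ∑ j, ω j).bddAbove
  refine ⟨N, fun D hD ω => ?_⟩
  obtain hω | hω := eq_or_ne (toZMod (a ω)) 0
  · by_cases hωD : ω ∈ {ω : ι → ℕ | ∑ j, ω j ≤ D} <;> simp [hωD, hω]
  · rw [Set.indicator_of_mem (show ω ∈ {ω : ι → ℕ | ∑ j, ω j ≤ D} from (hN ⟨ω, hω, rfl⟩).trans hD)]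

end Truncation

theorem stmt_19_general (p : ℕ) [Fact p.Prime] (n : ℕ)
    [MeasurableSpace ℤ_[p]] [BorelSpace ℤ_[p]] (μ : Measure ℤ_[p]) [μ.IsAddHaarMeasure]
    (a : (Fin n → ℕ) → ℤ_[p]) (ha : Tendsto a cofinite (nhds 0)) (hnd : NonDegenerate p n a) :
    ∃ N : ℕ, ∀ D : ℕ, N ≤ D →
      ProbabilityTheory.IdentDistrib
        (fun x : Fin n → ℤ_[p] => ‖∑' ω : Fin n → ℕ,
          Set.indicator {ω : Fin n → ℕ | ∑ j, ω j ≤ D} (fun ω => a ω * ∏ j, x j ^ ω j) ω‖)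
        (fun x : Fin n → ℤ_[p] => ‖∑' ω : Fin n → ℕ, a ω * ∏ j, x j ^ ω j‖)
        (Measure.pi fun _ => μ) (Measure.pi fun _ => μ) := by
  obtain ⟨N, hN⟩ := exists_toZMod_indicator_degree_le_eq ha
  refine ⟨N, fun D hD => ?_⟩
  simpa only [seriesEval, Set.indicator_mul_left] using
    hnd.identDistrib_norm_seriesEval ha
      (tendsto_indicator_zero ha {ω : Fin n → ℕ | ∑ j, ω j ≤ D})
      (fun ω hω => (Set.indicator_apply_ne_zero.1 hω).2) (hN D hD) μ

/-- If a nonzero restricted power series `f = ∑ a_ω x^ω` over `ℤ_p` with `f(0) = 0` is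
non-degenerate over `𝔽_p` with respect to all the faces of its Newton polyhedron, then
for all sufficiently large `D` the truncation `f_D` (terms of total degree `≤ D`) has
the same Igusa zeta function as `f`. -/
theorem stmt_19 (p : ℕ) [Fact p.Prime] (n : ℕ)
    [MeasurableSpace ℤ_[p]] [BorelSpace ℤ_[p]]
    (μ : Measure ℤ_[p]) [μ.IsAddHaarMeasure] (hμ : μ Set.univ = 1)
    (a : (Fin n → ℕ) → ℤ_[p]) (ha : Tendsto a cofinite (nhds 0))
    (hfne : ∃ ω, a ω ≠ 0) (h0 : a 0 = 0)
    (hnd : NonDegenerate p n a) :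
    ∃ N : ℕ, ∀ D : ℕ, N ≤ D → ∀ s : ℝ, 0 < s →
      (∫ x : Fin n → ℤ_[p],
          ‖∑' ω : Fin n → ℕ,
            Set.indicator {ω : Fin n → ℕ | ∑ j, ω j ≤ D}
              (fun ω => a ω * ∏ j, x j ^ ω j) ω‖ ^ s
          ∂(Measure.pi fun _ => μ))
        = ∫ x : Fin n → ℤ_[p],
            ‖∑' ω : Fin n → ℕ, a ω * ∏ j, x j ^ ω j‖ ^ s
            ∂(Measure.pi fun _ => μ) := by
  obtain ⟨N, hN⟩ := stmt_19_general p n μ a ha hnd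
  exact ⟨N, fun D hD s _ => ((hN D hD).comp (measurable_id.pow_const s)).integral_eq⟩
end
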